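/- Let K ≥ 0. Let u : ℝ² → ℂ be 2π-periodic and C¹ with |u|⁴ and ‖∇u‖² integrable on Q, and let n, v : ℝ² → ℝ be 2π-periodic with n², v² integrable on Q. Assume E(u,n,v) ≤ K and ‖u‖_{L⁴(T²)} ≤ K. Then ‖v‖_{L²(T²)}² ≤ 2K + K⁴ and ‖n‖_{L²(T²)} ≤ K² + (2K + K⁴)^{1/2}. -/

import Mathlib

open MeasureTheory Real Set

noncomputable section

abbrev R2 := EuclideanSpace ℝ (Fin 2)

def Q2 : Set R2 := {x | ∀ i, x i ∈ Icc (-π) π}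

def Periodic2 {E : Type*} (f : R2 → E) : Prop :=
  ∀ (x : R2) (k : Fin 2 → ℤ),
    f (x + (EuclideanSpace.equiv (Fin 2) ℝ).symm (fun i => 2 * π * (k i : ℝ))) = f x
/-- The Zakharov energy 𝓔(u,n,v). -/
noncomputable def zakharovEnergy (u : R2 → ℂ) (n v : R2 → ℝ) : ℝ :=
  (∫ x in Q2, ‖fderiv ℝ u x‖ ^ 2) + (1/2) * (∫ x in Q2, (n x) ^ 2)
    + (1/2) * (∫ x in Q2, (v x) ^ 2) + ∫ x in Q2, n x * ‖u x‖ ^ 2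
/-- Coercivity of the Zakharov energy (core of Lemma 5.1). -/
theorem stmt11 (K : ℝ) (hK : 0 ≤ K) (u : R2 → ℂ) (n v : R2 → ℝ)
    (hu_per : Periodic2 u) (hn_per : Periodic2 n) (hv_per : Periodic2 v)
    (hn_meas : Measurable n) (hv_meas : Measurable v)
    (hu_smooth : ContDiff ℝ 1 u)
    (hu4 : IntegrableOn (fun x => ‖u x‖ ^ 4) Q2)
    (hgrad : IntegrableOn (fun x => ‖fderiv ℝ u x‖ ^ 2) Q2)
    (hn2 : IntegrableOn (fun x => (n x) ^ 2) Q2)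
    (hv2 : IntegrableOn (fun x => (v x) ^ 2) Q2)
    (hE : zakharovEnergy u n v ≤ K)
    (hu4K : (∫ x in Q2, ‖u x‖ ^ 4) ^ ((1:ℝ)/4) ≤ K) :
    (∫ x in Q2, (v x) ^ 2) ≤ 2 * K + K ^ 4 ∧
      (∫ x in Q2, (n x) ^ 2) ^ ((1:ℝ)/2) ≤ K ^ 2 + (2 * K + K ^ 4) ^ ((1:ℝ)/2) := by
  have hB : IntegrableOn (fun x => n x * ‖u x‖ ^ 2) Q2 := by
    refine Integrable.mono' (hn2.add hu4) ?_ ?_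
    · exact (hn_meas.mul ((hu_smooth.continuous.norm.pow 2).measurable)).aestronglyMeasurable
    · refine Filter.Eventually.of_forall fun x => ?_
      simp only [Pi.add_apply, Real.norm_eq_abs]
      rw [abs_le]
      constructor <;> nlinarith [sq_nonneg (n x + ‖u x‖ ^ 2), sq_nonneg (n x - ‖u x‖ ^ 2),
        sq_nonneg (n x), sq_nonneg (‖u x‖ ^ 2)]
  have hG0 : 0 ≤ ∫ x in Q2, ‖fderiv ℝ u x‖ ^ 2 := integral_nonneg fun x => by positivity
  have hA0 : 0 ≤ ∫ x in Q2, ‖u x‖ ^ 4 := integral_nonneg fun x => by positivity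
  have hN0 : 0 ≤ ∫ x in Q2, (n x) ^ 2 := integral_nonneg fun x => by positivity
  have hV0 : 0 ≤ ∫ x in Q2, (v x) ^ 2 := integral_nonneg fun x => by positivity
  have hquad : ∀ t : ℝ, 0 ≤ (∫ x in Q2, ‖u x‖ ^ 4) * (t * t)
      + (2 * ∫ x in Q2, n x * ‖u x‖ ^ 2) * t + ∫ x in Q2, (n x) ^ 2 := by
    intro t
    have h0 : 0 ≤ ∫ x in Q2, (n x + t * ‖u x‖ ^ 2) ^ 2 := integral_nonneg fun x => by positivity
    have h1 : (∫ x in Q2, (n x + t * ‖u x‖ ^ 2) ^ 2)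
        = ∫ x in Q2, ((t * t) * ‖u x‖ ^ 4 + (2 * t) * (n x * ‖u x‖ ^ 2) + (n x) ^ 2) := by
      congr 1
      funext x
      ring
    have h2 : Integrable (fun x => (t * t) * ‖u x‖ ^ 4 + (2 * t) * (n x * ‖u x‖ ^ 2))
        (volume.restrict Q2) := (hu4.const_mul _).add (hB.const_mul _)
    rw [h1, integral_add h2 hn2,
      integral_add (hu4.const_mul _) (hB.const_mul _), integral_const_mul,
      integral_const_mul] at h0
    linarith
  unfold zakharovEnergy at hE
  generalize (∫ x in Q2, ‖fderiv ℝ u x‖ ^ 2) = G at *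
  generalize (∫ x in Q2, ‖u x‖ ^ 4) = A at *
  generalize (∫ x in Q2, (n x) ^ 2) = N at *
  generalize (∫ x in Q2, (v x) ^ 2) = V at *
  generalize (∫ x in Q2, n x * ‖u x‖ ^ 2) = B at *
  have hA : A ≤ K ^ 4 := by
    have h := pow_le_pow_left₀ (by positivity) hu4K 4
    rw [← Real.rpow_natCast (A ^ ((1:ℝ)/4)) 4, ← Real.rpow_mul hA0] at h
    norm_num at h
    exact h
  have hd := discrim_le_zero hquad
  unfold discrim at hd
  have h1 := hquad 1
  refine ⟨by linarith, ?_⟩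
  rw [← Real.sqrt_eq_rpow, ← Real.sqrt_eq_rpow]
  have hs := Real.sq_sqrt hN0
  have ha := Real.sq_sqrt hA0
  have hs0 := Real.sqrt_nonneg N
  have ha0 := Real.sqrt_nonneg A
  have haK : √A ≤ K ^ 2 := by
    rw [Real.sqrt_le_left (by positivity)]
    linarith [show (K ^ 2) ^ 2 = K ^ 4 by ring]
  have hBB : |B| ≤ √N * √A := by
    refine abs_le_of_sq_le_sq ?_ (by positivity)
    rw [mul_pow, hs, ha]
    linarith
  have hB1 := (abs_le.mp hBB).1
  have h2 : √N - √A ≤ √(2 * K + K ^ 4) := by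
    apply Real.le_sqrt_of_sq_le
    nlinarith
  linarith
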